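/- arXiv:2002.09682 — 2 statements merged into one kernel-verified Lean document; each statement's English description precedes it below -/
import Mathlib

section
/- Soundness of CKA with hypotheses: for any set H of hypotheses and CKA terms e and f, if e ≡^H f then cl_H(⟦e⟧) = cl_H(⟦f⟧). -/
namespace CKAH

open Classical

/-! ### Labelled posets and pomsets -/

/-- A labelled poset over alphabet `A`: a finite carrier with a partial order and labelling. -/
structure LPoset (A : Type) : Type 1 where
  carrier : Type
  [fin : Fintype carrier]
  [ord : PartialOrder carrier]
  lab : carrier → A

attribute [instance] LPoset.fin LPoset.ord

/-- Isomorphism of labelled posets: an order isomorphism preserving labels. -/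
def LPoset.Iso {A : Type} (u v : LPoset A) : Prop :=
  ∃ e : u.carrier ≃o v.carrier, ∀ x, v.lab (e x) = u.lab x

theorem LPoset.iso_equivalence (A : Type) : Equivalence (LPoset.Iso (A := A)) where
  refl u := ⟨OrderIso.refl _, fun _ => rfl⟩
  symm := by
    rintro u v ⟨e, he⟩
    exact ⟨e.symm, fun x => by rw [← he (e.symm x), OrderIso.apply_symm_apply]⟩
  trans := by
    rintro u v w ⟨e, he⟩ ⟨f, hf⟩
    exact ⟨e.trans f, fun x => by rw [OrderIso.trans_apply, hf, he]⟩

instance pomSetoid (A : Type) : Setoid (LPoset A) := ⟨LPoset.Iso, LPoset.iso_equivalence A⟩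

/-- A pomset is an isomorphism class of labelled posets. -/
def Pomset (A : Type) : Type 1 := Quotient (pomSetoid A)

/-- Sequential composition of labelled posets: disjoint union, everything on the left
below everything on the right (lexicographic sum order). -/
def LPoset.seqL {A : Type} (u v : LPoset A) : LPoset A where
  carrier := u.carrier ⊕ₗ v.carrier
  fin := inferInstanceAs (Fintype (u.carrier ⊕ v.carrier))
  lab := fun x => Sum.elim u.lab v.lab (ofLex x)

/-- Parallel composition of labelled posets: disjoint union with no cross ordering. -/
def LPoset.parL {A : Type} (u v : LPoset A) : LPoset A where
  carrier := u.carrier ⊕ v.carrier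
  lab := Sum.elim u.lab v.lab

def Pomset.seq {A : Type} : Pomset A → Pomset A → Pomset A :=
  Quotient.map₂ LPoset.seqL (by
    rintro u₁ u₂ ⟨e, he⟩ v₁ v₂ ⟨f, hf⟩
    refine ⟨(RelIso.sumLexCongr e f :
      (u₁.carrier ⊕ₗ v₁.carrier) ≃o (u₂.carrier ⊕ₗ v₂.carrier)), ?_⟩
    rintro (x | x)
    · exact he x
    · exact hf x)

/-- Order isomorphism between disjoint-union orders, from component isomorphisms. -/
def sumOrderIso {α β γ δ : Type} [PartialOrder α] [PartialOrder β] [PartialOrder γ]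
    [PartialOrder δ] (e : α ≃o γ) (f : β ≃o δ) : (α ⊕ β) ≃o (γ ⊕ δ) where
  toEquiv := Equiv.sumCongr e.toEquiv f.toEquiv
  map_rel_iff' := by
    rintro (x | x) (y | y) <;> simp [Sum.le_def, e.le_iff_le, f.le_iff_le]

def Pomset.par {A : Type} : Pomset A → Pomset A → Pomset A :=
  Quotient.map₂ LPoset.parL (by
    rintro u₁ u₂ ⟨e, he⟩ v₁ v₂ ⟨f, hf⟩
    refine ⟨sumOrderIso e f, ?_⟩
    rintro (x | x)
    · exact he x
    · exact hf x)

def LPoset.emptyL (A : Type) : LPoset A := { carrier := Fin 0, lab := fun x => x.elim0 }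

def LPoset.singleL {A : Type} (a : A) : LPoset A := { carrier := PUnit, lab := fun _ => a }

/-- The empty pomset `1`. -/
def Pomset.empty (A : Type) : Pomset A := ⟦LPoset.emptyL A⟧

/-- The single-letter pomset. -/
def Pomset.single {A : Type} (a : A) : Pomset A := ⟦LPoset.singleL a⟧

/-- Subsumption on labelled posets: `u ⊑ v` iff there is a label-preserving
order-preserving bijection from the carrier of `v` to that of `u`. -/
def LPoset.subL {A : Type} (u v : LPoset A) : Prop :=
  ∃ h : v.carrier ≃ u.carrier,
    (∀ x, u.lab (h x) = v.lab x) ∧ ∀ x y : v.carrier, x ≤ y → h x ≤ h y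

/-- Subsumption of pomsets: `Pomset.sub U V` means `U ⊑ V`. -/
def Pomset.sub {A : Type} : Pomset A → Pomset A → Prop :=
  Quotient.lift₂ LPoset.subL (by
    rintro u₁ v₁ u₂ v₂ ⟨e, he⟩ ⟨f, hf⟩
    refine propext ⟨?_, ?_⟩
    · rintro ⟨h, hl, hm⟩
      refine ⟨(f.toEquiv.symm.trans h).trans e.toEquiv, fun x => ?_, fun x y hxy => ?_⟩
      · show u₂.lab (e (h (f.symm x))) = v₂.lab x
        rw [he, hl, ← hf (f.symm x), OrderIso.apply_symm_apply]
      · simp only [Equiv.trans_apply]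
        exact e.le_iff_le.mpr (hm _ _ (f.symm.le_iff_le.mpr hxy))
    · rintro ⟨h, hl, hm⟩
      refine ⟨(f.toEquiv.trans h).trans e.toEquiv.symm, fun x => ?_, fun x y hxy => ?_⟩
      · show u₁.lab (e.symm (h (f x))) = v₁.lab x
        rw [← he (e.symm (h (f x))), OrderIso.apply_symm_apply, hl, hf]
      · simp only [Equiv.trans_apply]
        exact e.symm.le_iff_le.mpr (hm _ _ (f.le_iff_le.mpr hxy)))

def LPoset.isWordL {A : Type} (u : LPoset A) : Prop := ∀ x y : u.carrier, x ≤ y ∨ y ≤ x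

/-- A pomset is a word when it is totally ordered. -/
def Pomset.IsWord {A : Type} : Pomset A → Prop :=
  Quotient.lift LPoset.isWordL (by
    rintro u v ⟨e, -⟩
    refine propext ⟨fun h x y => ?_, fun h x y => ?_⟩
    · rcases h (e.symm x) (e.symm y) with h' | h'
      · exact Or.inl (e.symm.le_iff_le.mp h')
      · exact Or.inr (e.symm.le_iff_le.mp h')
    · rcases h (e x) (e y) with h' | h'
      · exact Or.inl (e.le_iff_le.mp h')
      · exact Or.inr (e.le_iff_le.mp h'))

def LPoset.mapL {A B : Type} (f : A → B) (u : LPoset A) : LPoset B :=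
  { carrier := u.carrier, lab := f ∘ u.lab }

/-- Relabelling of pomsets along a function on letters. -/
def Pomset.map {A B : Type} (f : A → B) : Pomset A → Pomset B :=
  Quotient.map (LPoset.mapL f)
    (by rintro u v ⟨e, he⟩; exact ⟨e, fun x => congrArg f (he x)⟩)

def LPoset.overL {A : Type} (Γ : Set A) (u : LPoset A) : Prop := ∀ x, u.lab x ∈ Γ

/-- All labels of the pomset belong to `Γ`. -/
def Pomset.Over {A : Type} (Γ : Set A) : Pomset A → Prop :=
  Quotient.lift (LPoset.overL Γ) (by
    rintro u v ⟨e, he⟩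
    refine propext ⟨fun h x => ?_, fun h x => ?_⟩
    · have h2 := he (e.symm x)
      rw [OrderIso.apply_symm_apply] at h2
      rw [h2]; exact h _
    · rw [← he x]; exact h _)

/-- Series-parallel pomsets. -/
inductive Pomset.IsSP {A : Type} : Pomset A → Prop
  | empty : Pomset.IsSP (Pomset.empty A)
  | single (a : A) : Pomset.IsSP (Pomset.single a)
  | seq {U V : Pomset A} : Pomset.IsSP U → Pomset.IsSP V → Pomset.IsSP (Pomset.seq U V)
  | par {U V : Pomset A} : Pomset.IsSP U → Pomset.IsSP V → Pomset.IsSP (Pomset.par U V)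

def SPset (A : Type) : Set (Pomset A) := {U | U.IsSP}

/-! ### Pomset contexts -/

/-- Contexts are pomsets over `Option A`, where `none` plays the role of `*`.
`uniqueStarL` says there is exactly one `*`-labelled node. -/
def LPoset.uniqueStarL {A : Type} (c : LPoset (Option A)) : Prop := ∃! x, c.lab x = none

theorem LPoset.uniqueStarL_congr {A : Type} {u v : LPoset (Option A)}
    (e : u.carrier ≃o v.carrier) (he : ∀ x, v.lab (e x) = u.lab x) :
    u.uniqueStarL ↔ v.uniqueStarL := by
  constructor
  · rintro ⟨x, hx, hux⟩
    refine ⟨e x, show v.lab (e x) = none by rw [he]; exact hx, fun y hy => ?_⟩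
    have h2 := he (e.symm y)
    rw [OrderIso.apply_symm_apply] at h2
    have h3 : e.symm y = x := hux _ (h2.symm.trans hy)
    rw [← h3, OrderIso.apply_symm_apply]
  · rintro ⟨x, hx, hvx⟩
    refine ⟨e.symm x, ?_, fun y hy => ?_⟩
    · show u.lab (e.symm x) = none
      have h2 := he (e.symm x)
      rw [OrderIso.apply_symm_apply] at h2
      rw [← h2]; exact hx
    · have h3 : e y = x := hvx _ (show v.lab (e y) = none by rw [he]; exact hy)
      rw [← h3, OrderIso.symm_apply_apply]

/-- A pomset context: exactly one node labelled `*`. -/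
def Pomset.IsCtx {A : Type} : Pomset (Option A) → Prop :=
  Quotient.lift LPoset.uniqueStarL
    (fun _ _ h => propext (LPoset.uniqueStarL_congr h.choose h.choose_spec))

/-- Series-parallel pomset contexts. -/
def Pomset.IsSPCtx {A : Type} (C : Pomset (Option A)) : Prop := C.IsCtx ∧ C.IsSP

/-- Sequential (totally ordered) pomset contexts. -/
def Pomset.IsSeqCtx {A : Type} (C : Pomset (Option A)) : Prop := C.IsCtx ∧ C.IsWord

/-- The trivial context `*`. -/
def starCtx (A : Type) : Pomset (Option A) := Pomset.single (none : Option A)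

theorem option_get_eq_get {α : Type} {o₁ o₂ : Option α} (h : o₁ = o₂) (h₁ : o₁.isSome)
    (h₂ : o₂.isSome) : o₁.get h₁ = o₂.get h₂ := by subst h; rfl

/-- The order of `C[U]`: the orders of `C` (restricted away from `*`) and of `U`, with a
point of `C` below (resp. above) all of `U` when it is below (resp. above) the unique
`*`-node of `C`.  (For well-definedness of the order, the cross-relations are guarded by
the requirement that the star node is unique, which holds for every genuine context.) -/
def LPoset.insLe {A : Type} (c : LPoset (Option A)) (u : LPoset A) :
    ({x : c.carrier // c.lab x ≠ none} ⊕ u.carrier) →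
    ({x : c.carrier // c.lab x ≠ none} ⊕ u.carrier) → Prop
  | Sum.inl x, Sum.inl y => x.val ≤ y.val
  | Sum.inr x, Sum.inr y => x ≤ y
  | Sum.inl x, Sum.inr _ => c.uniqueStarL ∧ ∃ s, c.lab s = none ∧ x.val ≤ s
  | Sum.inr _, Sum.inl y => c.uniqueStarL ∧ ∃ s, c.lab s = none ∧ s ≤ y.val

/-- Insertion of a labelled poset `u` into the gap of a context `c`: the `*`-labelled
node is removed and `u` is put in its place, inheriting the order relations of `*`. -/
noncomputable def LPoset.insL {A : Type} (c : LPoset (Option A)) (u : LPoset A) :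
    LPoset A where
  carrier := {x : c.carrier // c.lab x ≠ none} ⊕ u.carrier
  fin := by classical exact inferInstance
  ord :=
    { le := LPoset.insLe c u
      lt := fun p q => LPoset.insLe c u p q ∧ ¬ LPoset.insLe c u q p
      lt_iff_le_not_ge := fun _ _ => Iff.rfl
      le_refl := by rintro (x | x) <;> exact le_refl _
      le_trans := by
        rintro (x | x) (y | y) (z | z) h1 h2
        · exact le_trans h1 h2
        · obtain ⟨hu, s, hs, hys⟩ := h2
          exact ⟨hu, s, hs, le_trans h1 hys⟩
        · obtain ⟨hu, s, hs, hxs⟩ := h1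
          obtain ⟨-, t, ht, htz⟩ := h2
          obtain ⟨w, hw, huniq⟩ := hu
          have hst : s = t := (huniq s hs).trans (huniq t ht).symm
          exact le_trans (hst ▸ hxs) htz
        · exact h1
        · obtain ⟨hu, s, hs, hsy⟩ := h1
          exact ⟨hu, s, hs, le_trans hsy h2⟩
        · obtain ⟨hu, s, hs, hsy⟩ := h1
          obtain ⟨-, t, ht, hyt⟩ := h2
          obtain ⟨w, hw, huniq⟩ := hu
          have hst : s = t := (huniq s hs).trans (huniq t ht).symm
          have hy : y.val = s := le_antisymm (hst.symm ▸ hyt) hsy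
          exact absurd (hy.symm ▸ hs) y.prop
        · exact h2
        · exact le_trans h1 h2
      le_antisymm := by
        rintro (x | x) (y | y) h1 h2
        · exact congrArg Sum.inl (Subtype.ext (le_antisymm h1 h2))
        · obtain ⟨hu, s, hs, hxs⟩ := h1
          obtain ⟨-, t, ht, htx⟩ := h2
          obtain ⟨w, hw, huniq⟩ := hu
          have hst : s = t := (huniq s hs).trans (huniq t ht).symm
          have hx : x.val = s := le_antisymm hxs (hst.symm ▸ htx)
          exact absurd (hx.symm ▸ hs) x.prop
        · obtain ⟨hu, s, hs, hsy⟩ := h1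
          obtain ⟨-, t, ht, hyt⟩ := h2
          obtain ⟨w, hw, huniq⟩ := hu
          have hst : s = t := (huniq s hs).trans (huniq t ht).symm
          have hy : y.val = s := le_antisymm (hst.symm ▸ hyt) hsy
          exact absurd (hy.symm ▸ hs) y.prop
        · exact congrArg Sum.inr (le_antisymm h1 h2) }
  lab := Sum.elim (fun x => (c.lab x.val).get (Option.isSome_iff_ne_none.mpr x.prop)) u.lab

/-- `Pomset.ins C U` is `C[U]`: plugging the pomset `U` into the gap of the context `C`. -/
noncomputable def Pomset.ins {A : Type} : Pomset (Option A) → Pomset A → Pomset A :=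
  Quotient.map₂ LPoset.insL (by
    rintro c₁ c₂ ⟨e, he⟩ u₁ u₂ ⟨f, hf⟩
    have hstar : c₁.uniqueStarL ↔ c₂.uniqueStarL := LPoset.uniqueStarL_congr e he
    refine ⟨{ toEquiv := Equiv.sumCongr
                (e.toEquiv.subtypeEquiv fun x => by
                  rw [show c₂.lab (e.toEquiv x) = c₁.lab x from he x]) f.toEquiv
              map_rel_iff' := ?_ }, ?_⟩
    · rintro (x | x) (y | y)
      · exact e.le_iff_le
      · show (c₂.uniqueStarL ∧ ∃ s, c₂.lab s = none ∧ (e x.val : c₂.carrier) ≤ s) ↔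
             (c₁.uniqueStarL ∧ ∃ s, c₁.lab s = none ∧ x.val ≤ s)
        constructor
        · rintro ⟨hu, s, hs, hxs⟩
          refine ⟨hstar.mpr hu, e.symm s, ?_, ?_⟩
          · have h2 := he (e.symm s)
            rw [OrderIso.apply_symm_apply] at h2
            rw [← h2]; exact hs
          · exact e.le_iff_le.mp (by rw [OrderIso.apply_symm_apply]; exact hxs)
        · rintro ⟨hu, s, hs, hxs⟩
          exact ⟨hstar.mp hu, e s, by rw [he]; exact hs, e.le_iff_le.mpr hxs⟩
      · show (c₂.uniqueStarL ∧ ∃ s, c₂.lab s = none ∧ s ≤ (e y.val : c₂.carrier)) ↔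
             (c₁.uniqueStarL ∧ ∃ s, c₁.lab s = none ∧ s ≤ y.val)
        constructor
        · rintro ⟨hu, s, hs, hsy⟩
          refine ⟨hstar.mpr hu, e.symm s, ?_, ?_⟩
          · have h2 := he (e.symm s)
            rw [OrderIso.apply_symm_apply] at h2
            rw [← h2]; exact hs
          · exact e.le_iff_le.mp (by rw [OrderIso.apply_symm_apply]; exact hsy)
        · rintro ⟨hu, s, hs, hsy⟩
          exact ⟨hstar.mp hu, e s, by rw [he]; exact hs, e.le_iff_le.mpr hsy⟩
      · exact f.le_iff_le
    · rintro (x | x)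
      · exact option_get_eq_get (he x.val) _ _
      · exact hf x)

/-! ### Pomset languages -/

abbrev Lang (A : Type) := Set (Pomset A)

def Lang.seq {A : Type} (L K : Lang A) : Lang A :=
  {W | ∃ U ∈ L, ∃ V ∈ K, W = Pomset.seq U V}

def Lang.par {A : Type} (L K : Lang A) : Lang A :=
  {W | ∃ U ∈ L, ∃ V ∈ K, W = Pomset.par U V}

def Lang.pow {A : Type} (L : Lang A) : ℕ → Lang A
  | 0 => {Pomset.empty A}
  | n + 1 => Lang.seq (Lang.pow L n) L

def Lang.star {A : Type} (L : Lang A) : Lang A := ⋃ n, L.pow n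

/-- Application of a context to a language: `C[L] = {C[U] : U ∈ L}`. -/
def Ctx.img {A : Type} (C : Pomset (Option A)) (L : Lang A) : Lang A :=
  {W | ∃ U ∈ L, W = C.ins U}

/-! ### CKA terms and semantics -/

inductive Term (A : Type) : Type
  | zero : Term A
  | one : Term A
  | var : A → Term A
  | add : Term A → Term A → Term A
  | seq : Term A → Term A → Term A
  | par : Term A → Term A → Term A
  | star : Term A → Term A

/-- Pomset language semantics of CKA terms. -/
def Term.lang {A : Type} : Term A → Lang A
  | .zero => ∅
  | .one => {Pomset.empty A}
  | .var a => {Pomset.single a}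
  | .add e f => e.lang ∪ f.lang
  | .seq e f => Lang.seq e.lang f.lang
  | .par e f => Lang.par e.lang f.lang
  | .star e => Lang.star e.lang

/-- Sets of hypotheses: a hypothesis `e ≤ f` is the pair `(e, f)`. -/
abbrev HypSet (A : Type) := Set (Term A × Term A)

/-- The congruence `≡^H` on CKA terms generated by the CKA axioms and the hypotheses `H`
(the constructor `hyp` encodes `e ≦^H f`, i.e. `e + f ≡^H f`, for `e ≤ f ∈ H`). -/
inductive CongH {A : Type} (H : HypSet A) : Term A → Term A → Prop
  | refl (e) : CongH H e e
  | symm {e f} : CongH H e f → CongH H f e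
  | trans {e f g} : CongH H e f → CongH H f g → CongH H e g
  | addCong {e e' f f'} : CongH H e e' → CongH H f f' → CongH H (.add e f) (.add e' f')
  | seqCong {e e' f f'} : CongH H e e' → CongH H f f' → CongH H (.seq e f) (.seq e' f')
  | parCong {e e' f f'} : CongH H e e' → CongH H f f' → CongH H (.par e f) (.par e' f')
  | starCong {e e'} : CongH H e e' → CongH H (.star e) (.star e')
  | addZero (e) : CongH H (.add e .zero) e
  | addIdem (e) : CongH H (.add e e) e
  | addComm (e f) : CongH H (.add e f) (.add f e)
  | addAssoc (e f g) : CongH H (.add e (.add f g)) (.add (.add e f) g)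
  | seqAssoc (e f g) : CongH H (.seq e (.seq f g)) (.seq (.seq e f) g)
  | seqDistL (e f g) : CongH H (.seq e (.add f g)) (.add (.seq e f) (.seq e g))
  | seqDistR (e f g) : CongH H (.seq (.add e f) g) (.add (.seq e g) (.seq f g))
  | seqOneR (e) : CongH H (.seq e .one) e
  | seqOneL (e) : CongH H (.seq .one e) e
  | seqZeroR (e) : CongH H (.seq e .zero) .zero
  | seqZeroL (e) : CongH H (.seq .zero e) .zero
  | parComm (e f) : CongH H (.par e f) (.par f e)
  | parOne (e) : CongH H (.par e .one) e
  | parZero (e) : CongH H (.par e .zero) .zero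
  | parAssoc (e f g) : CongH H (.par e (.par f g)) (.par (.par e f) g)
  | parDist (e f g) : CongH H (.par e (.add f g)) (.add (.par e f) (.par e g))
  | starUnfoldL (e) : CongH H (.add .one (.seq e (.star e))) (.star e)
  | starUnfoldR (e) : CongH H (.add .one (.seq (.star e) e)) (.star e)
  | lfpL {e f g} : CongH H (.add (.add e (.seq f g)) g) g →
      CongH H (.add (.seq (.star f) e) g) g
  | lfpR {e f g} : CongH H (.add (.add e (.seq f g)) f) f →
      CongH H (.add (.seq e (.star g)) f) f
  | hyp {e f} : (e, f) ∈ H → CongH H (.add e f) f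

/-- `e ≦^H f`, the natural order `e + f ≡^H f`. -/
def LeH {A : Type} (H : HypSet A) (e f : Term A) : Prop := CongH H (.add e f) f

/-- The `H`-closure of a pomset language, as an inductive predicate: the smallest language
containing `L` such that for all `e ≤ f ∈ H` and series-parallel contexts `C`,
if `C[⟦f⟧] ⊆ cl` then `C[⟦e⟧] ⊆ cl`. -/
inductive closure {A : Type} (H : HypSet A) (L : Lang A) : Pomset A → Prop
  | base {U} : U ∈ L → closure H L U
  | step {e f : Term A} (hef : (e, f) ∈ H) {C : Pomset (Option A)} (hC : C.IsSPCtx)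
      (hf : ∀ V ∈ f.lang, closure H L (C.ins V)) {U} (hU : U ∈ e.lang) :
      closure H L (C.ins U)

/-- `cl H L` is the `H`-closure of `L`. -/
def cl {A : Type} (H : HypSet A) (L : Lang A) : Lang A := {U | closure H L U}

/-- The sequential closure: like `cl` but only sequential contexts are used. -/
inductive seqClosure {A : Type} (H : HypSet A) (L : Lang A) : Pomset A → Prop
  | base {U} : U ∈ L → seqClosure H L U
  | step {e f : Term A} (hef : (e, f) ∈ H) {C : Pomset (Option A)} (hC : C.IsSeqCtx)
      (hf : ∀ V ∈ f.lang, seqClosure H L (C.ins V)) {U} (hU : U ∈ e.lang) :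
      seqClosure H L (C.ins U)

def seqCl {A : Type} (H : HypSet A) (L : Lang A) : Lang A := {U | seqClosure H L U}

/-! ### Implication, completeness, reductions -/

/-- `H` implies `H'`: every hypothesis of `H'` is derivable from `H`. -/
def Implies {A : Type} (H H' : HypSet A) : Prop := ∀ p ∈ H', LeH H p.1 p.2

/-- `H` is complete: semantic equivalence implies axiomatic equivalence. -/
def Complete {A : Type} (H : HypSet A) : Prop :=
  ∀ e f : Term A, cl H e.lang = cl H f.lang → CongH H e f

/-- A reduction from `H` to `H'` (presupposing that `H` implies `H'`). -/
structure IsReduction {A : Type} (H H' : HypSet A) (r : Term A → Term A) : Prop where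
  implies : Implies H H'
  equiv : ∀ e, CongH H e (r e)
  reflect : ∀ e f : Term A, cl H e.lang = cl H f.lang → cl H' (r e).lang = cl H' (r f).lang

def Reduces {A : Type} (H H' : HypSet A) : Prop := ∃ r, IsReduction H H' r

/-- A strong reduction from `H` to `H'`. -/
structure IsStrongReduction {A : Type} (H H' : HypSet A) (r : Term A → Term A)
    extends IsReduction H H' r : Prop where
  strong : ∀ e : Term A, cl H e.lang = cl H' (r e).lang

def StronglyReduces {A : Type} (H H' : HypSet A) : Prop := ∃ r, IsStrongReduction H H' r

/-- `H` factorises into `H₀` and `H₁`. -/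
def Factorises {A : Type} (H H₀ H₁ : HypSet A) : Prop :=
  Implies H H₀ ∧ Implies H H₁ ∧ ∀ L : Lang A, L ⊆ SPset A → cl H L = cl H₁ (cl H₀ L)

/-! ### The exchange hypotheses and sp-subsumption -/

/-- The exchange hypotheses `(e∥f)·(g∥h) ≤ (e·g)∥(f·h)`. -/
def exch (A : Type) : HypSet A :=
  {p | ∃ e f g h : Term A,
    p = (Term.seq (.par e f) (.par g h), Term.par (.seq e g) (.seq f h))}

/-- `⊑^sp`: the smallest precongruence on series-parallel pomsets satisfying the
exchange inequality. -/
inductive spSub {A : Type} : Pomset A → Pomset A → Prop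
  | refl {U : Pomset A} : U.IsSP → spSub U U
  | trans {U V W} : spSub U V → spSub V W → spSub U W
  | seqCong {U V U' V'} : spSub U V → spSub U' V' → spSub (Pomset.seq U U') (Pomset.seq V V')
  | parCong {U V U' V'} : spSub U V → spSub U' V' → spSub (Pomset.par U U') (Pomset.par V V')
  | exch {U V W X : Pomset A} : U.IsSP → V.IsSP → W.IsSP → X.IsSP →
      spSub (Pomset.seq (Pomset.par U V) (Pomset.par W X))
            (Pomset.par (Pomset.seq U W) (Pomset.seq V X))

/-! ### KA terms, grounded hypotheses, sequential reductions -/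

/-- A term is a KA term when it contains no `∥`. -/
def Term.noPar {A : Type} : Term A → Prop
  | .zero => True
  | .one => True
  | .var _ => True
  | .add e f => e.noPar ∧ f.noPar
  | .seq e f => e.noPar ∧ f.noPar
  | .par _ _ => False
  | .star e => e.noPar

/-- A non-empty word. -/
def IsNonemptyWord {A : Type} (W : Pomset A) : Prop := W.IsWord ∧ W ≠ Pomset.empty A

/-- A set of hypotheses is grounded when in each hypothesis `e ≤ f`, `e` is a KA term and
`⟦f⟧ = {W}` for a non-empty word `W`. -/
def Grounded {A : Type} (H : HypSet A) : Prop :=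
  ∀ p ∈ H, p.1.noPar ∧ ∃ W : Pomset A, IsNonemptyWord W ∧ p.2.lang = {W}

/-- `≡_KA^H`: the congruence on terms generated by the axioms of `≡` not involving `∥`
together with the hypotheses of `H`. -/
inductive KACong {A : Type} (H : HypSet A) : Term A → Term A → Prop
  | refl (e) : KACong H e e
  | symm {e f} : KACong H e f → KACong H f e
  | trans {e f g} : KACong H e f → KACong H f g → KACong H e g
  | addCong {e e' f f'} : KACong H e e' → KACong H f f' → KACong H (.add e f) (.add e' f')
  | seqCong {e e' f f'} : KACong H e e' → KACong H f f' → KACong H (.seq e f) (.seq e' f')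
  | starCong {e e'} : KACong H e e' → KACong H (.star e) (.star e')
  | addZero (e) : KACong H (.add e .zero) e
  | addIdem (e) : KACong H (.add e e) e
  | addComm (e f) : KACong H (.add e f) (.add f e)
  | addAssoc (e f g) : KACong H (.add e (.add f g)) (.add (.add e f) g)
  | seqAssoc (e f g) : KACong H (.seq e (.seq f g)) (.seq (.seq e f) g)
  | seqDistL (e f g) : KACong H (.seq e (.add f g)) (.add (.seq e f) (.seq e g))
  | seqDistR (e f g) : KACong H (.seq (.add e f) g) (.add (.seq e g) (.seq f g))
  | seqOneR (e) : KACong H (.seq e .one) e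
  | seqOneL (e) : KACong H (.seq .one e) e
  | seqZeroR (e) : KACong H (.seq e .zero) .zero
  | seqZeroL (e) : KACong H (.seq .zero e) .zero
  | starUnfoldL (e) : KACong H (.add .one (.seq e (.star e))) (.star e)
  | starUnfoldR (e) : KACong H (.add .one (.seq (.star e) e)) (.star e)
  | lfpL {e f g} : KACong H (.add (.add e (.seq f g)) g) g →
      KACong H (.add (.seq (.star f) e) g) g
  | lfpR {e f g} : KACong H (.add (.add e (.seq f g)) f) f →
      KACong H (.add (.seq e (.star g)) f) f
  | hyp {e f} : (e, f) ∈ H → KACong H (.add e f) f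

/-- A sequential reduction from `H` to `H'`. -/
structure IsSeqReduction {A : Type} (H H' : HypSet A) (r : Term A → Term A) : Prop where
  implies : Implies H H'
  equiv : ∀ e : Term A, e.noPar → KACong H e (r e)
  closure_eq : ∀ e : Term A, e.noPar → seqCl H e.lang = seqCl H' (r e).lang

/-- Extension of a map on (KA) terms to all CKA terms, homomorphically on `∥`. -/
def parExt {A : Type} (r : Term A → Term A) : Term A → Term A
  | .par e f => .par (parExt r e) (parExt r f)
  | e => r e

/-! ### Inductive characterisation of sp contexts -/

/-- The generators of series-parallel contexts (Lemma: `PC^sp` is the smallest such set). -/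
inductive GenCtx {A : Type} : Pomset (Option A) → Prop
  | star : GenCtx (Pomset.single (none : Option A))
  | seqL {U : Pomset A} {C} : U.IsSP → GenCtx C → GenCtx (Pomset.seq (Pomset.map some U) C)
  | seqR {C} {V : Pomset A} : GenCtx C → V.IsSP → GenCtx (Pomset.seq C (Pomset.map some V))
  | par {U : Pomset A} {C} : U.IsSP → GenCtx C → GenCtx (Pomset.par (Pomset.map some U) C)

/-! ### Reification -/

/-- Homomorphic extension of a letter map to terms. -/
def rTerm {A : Type} (r : A → Term A) : Term A → Term A
  | .zero => .zero
  | .one => .one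
  | .var a => r a
  | .add e f => .add (rTerm r e) (rTerm r f)
  | .seq e f => .seq (rTerm r e) (rTerm r f)
  | .par e f => .par (rTerm r e) (rTerm r f)
  | .star e => .star (rTerm r e)

/-- All letters of a term lie in `Γ`. -/
def TermOver {A : Type} (Γ : Set A) : Term A → Prop
  | .zero => True
  | .one => True
  | .var a => a ∈ Γ
  | .add e f => TermOver Γ e ∧ TermOver Γ f
  | .seq e f => TermOver Γ e ∧ TermOver Γ f
  | .par e f => TermOver Γ e ∧ TermOver Γ f
  | .star e => TermOver Γ e

/-- Extension of a letter map `r` to (series-parallel) pomsets, as a relation: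
`rMap r U V` means `V ∈ r(U)`. -/
inductive rMap {A : Type} (r : A → Term A) : Pomset A → Pomset A → Prop
  | one : rMap r (Pomset.empty A) (Pomset.empty A)
  | var (a : A) {V} : V ∈ (r a).lang → rMap r (Pomset.single a) V
  | seq {U U' V V'} : rMap r U V → rMap r U' V' →
      rMap r (Pomset.seq U U') (Pomset.seq V V')
  | par {U U' V V'} : rMap r U V → rMap r U' V' →
      rMap r (Pomset.par U U') (Pomset.par V V')

/-- Image of a language under (the pomset extension of) `r`. -/
def rImg {A : Type} (r : A → Term A) (L : Lang A) : Lang A := {V | ∃ U ∈ L, rMap r U V}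

/-- Series-parallel pomsets over the subalphabet `Γ`. -/
def SPover {A : Type} (Γ : Set A) : Lang A := {U | U.IsSP ∧ U.Over Γ}

/-- `r : Σ → Term Γ` is a reification from `H` to `H'`. -/
structure IsReification {A : Type} (Γ : Set A) (H H' : HypSet A) (r : A → Term A) : Prop where
  toGamma : ∀ a : A, TermOver Γ (r a)
  equiv : ∀ a : A, CongH H (r a) (.var a)
  expansive : ∀ a ∈ Γ, LeH (∅ : HypSet A) (.var a) (r a)
  preserves : ∀ L : Lang A, L ⊆ SPover Γ → cl H' L ⊆ SPover Γ
  hyps : ∀ p ∈ H, LeH H' (rTerm r p.1) (rTerm r p.2)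

end CKAH

namespace CKAH

/-!
The sp contexts absorb composition with an sp pomset: `U·C[V] = (U·C)[V]`, `C[V]·U = (C·U)[V]` and
`U∥C[V] = (U∥C)[V]`. By induction on the closure, `L·cl_H(K) ⊆ cl_H(L·K)` for every language `L` of
sp pomsets, and similarly for `cl_H(K)·L` and `L∥cl_H(K)`; hence `cl_H`-equality is a congruence for
the operations on languages of sp pomsets. The equational axioms already hold before closing. For
the least-fixpoint rules, `e + f·g ≦ g` makes `cl_H⟦g⟧` stable under left multiplication by `⟦f⟧`,
so that Kleene induction applies to `cl_H⟦g⟧` itself. The hypotheses hold by the context `*`.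
-/

namespace LPoset

variable {A : Type} {u v : LPoset A}

theorem seqL_inl_le_inl {x y : u.carrier} :
    LE.le (α := (u.seqL v).carrier) (Sum.inl x) (Sum.inl y) ↔ x ≤ y :=
  Sum.Lex.inl_le_inl_iff

theorem seqL_inr_le_inr {x y : v.carrier} :
    LE.le (α := (u.seqL v).carrier) (Sum.inr x) (Sum.inr y) ↔ x ≤ y :=
  Sum.Lex.inr_le_inr_iff

theorem seqL_inl_le_inr (x : u.carrier) (y : v.carrier) :
    LE.le (α := (u.seqL v).carrier) (Sum.inl x) (Sum.inr y) :=
  Sum.Lex.inl_le_inr x y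

theorem not_seqL_inr_le_inl {x : u.carrier} {y : v.carrier} :
    ¬ LE.le (α := (u.seqL v).carrier) (Sum.inr y) (Sum.inl x) :=
  Sum.Lex.not_inr_le_inl

theorem parL_inl_le_inl {x y : u.carrier} :
    LE.le (α := (u.parL v).carrier) (Sum.inl x) (Sum.inl y) ↔ x ≤ y :=
  Sum.inl_le_inl_iff

theorem parL_inr_le_inr {x y : v.carrier} :
    LE.le (α := (u.parL v).carrier) (Sum.inr x) (Sum.inr y) ↔ x ≤ y :=
  Sum.inr_le_inr_iff

theorem not_parL_inl_le_inr {x : u.carrier} {y : v.carrier} :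
    ¬ LE.le (α := (u.parL v).carrier) (Sum.inl x) (Sum.inr y) :=
  Sum.not_inl_le_inr

theorem not_parL_inr_le_inl {x : u.carrier} {y : v.carrier} :
    ¬ LE.le (α := (u.parL v).carrier) (Sum.inr y) (Sum.inl x) :=
  Sum.not_inr_le_inl

/-- `s` is the gap of the context `c`: the one node labelled `*`. -/
def IsStar (c : LPoset (Option A)) (s : c.carrier) : Prop := ∀ x, c.lab x = none ↔ x = s

variable {c : LPoset (Option A)} {s : c.carrier}

theorem uniqueStarL_iff : c.uniqueStarL ↔ ∃ s, c.IsStar s := by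
  refine exists_congr fun s => ⟨fun ⟨hs, hu⟩ x => ⟨hu x, fun hx => hx ▸ hs⟩, fun h => ?_⟩
  exact ⟨(h s).2 rfl, fun x => (h x).1⟩

theorem IsStar.uniqueStarL (h : c.IsStar s) : c.uniqueStarL := uniqueStarL_iff.2 ⟨s, h⟩

theorem IsStar.map_some_seqL (h : c.IsStar s) (u : LPoset A) :
    ((u.mapL some).seqL c).IsStar (Sum.inr s) := by
  rintro (x | x)
  · exact iff_of_false (Option.some_ne_none _) Sum.inl_ne_inr
  · exact (h x).trans Sum.inr_injective.eq_iff.symm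

theorem IsStar.seqL_map_some (h : c.IsStar s) (u : LPoset A) :
    (c.seqL (u.mapL some)).IsStar (Sum.inl s) := by
  rintro (x | x)
  · exact (h x).trans Sum.inl_injective.eq_iff.symm
  · exact iff_of_false (Option.some_ne_none _) Sum.inr_ne_inl

theorem IsStar.map_some_parL (h : c.IsStar s) (u : LPoset A) :
    ((u.mapL some).parL c).IsStar (Sum.inr s) := by
  rintro (x | x)
  · exact iff_of_false (Option.some_ne_none _) Sum.inl_ne_inr
  · exact (h x).trans Sum.inr_injective.eq_iff.symm

theorem insL_inr_le_inr {x y : u.carrier} :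
    LE.le (α := (c.insL u).carrier) (Sum.inr x) (Sum.inr y) ↔ x ≤ y :=
  Iff.rfl

theorem IsStar.insL_inl_le_inr (h : c.IsStar s) {x : {x : c.carrier // c.lab x ≠ none}}
    {y : u.carrier} : LE.le (α := (c.insL u).carrier) (Sum.inl x) (Sum.inr y) ↔ x.1 ≤ s :=
  ⟨fun ⟨_, t, ht, hxt⟩ => (h t).1 ht ▸ hxt, fun hxs => ⟨h.uniqueStarL, s, (h s).2 rfl, hxs⟩⟩

theorem IsStar.insL_inr_le_inl (h : c.IsStar s) {x : u.carrier}
    {y : {x : c.carrier // c.lab x ≠ none}} :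
    LE.le (α := (c.insL u).carrier) (Sum.inr x) (Sum.inl y) ↔ s ≤ y.1 :=
  ⟨fun ⟨_, t, ht, hty⟩ => (h t).1 ht ▸ hty, fun hsy => ⟨h.uniqueStarL, s, (h s).2 rfl, hsy⟩⟩

theorem Iso.of_surjective (f : u.carrier → v.carrier) (hf : Function.Surjective f)
    (hle : ∀ x y, f x ≤ f y ↔ x ≤ y) (hlab : ∀ x, v.lab (f x) = u.lab x) : u.Iso v :=
  ⟨RelIso.ofSurjective (OrderEmbedding.ofMapLEIff f hle) hf, hlab⟩

theorem IsStar.seqL_insL_iso (h : c.IsStar s) (u v : LPoset A) :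
    (u.seqL (c.insL v)).Iso (((u.mapL some).seqL c).insL v) := by
  have hs := h.map_some_seqL u
  refine Iso.of_surjective
    (Sum.elim (fun x => Sum.inl ⟨Sum.inl x, Option.some_ne_none _⟩)
      (Sum.map (fun y => ⟨Sum.inr y.1, y.2⟩) id)) ?_ ?_ ?_
  · rintro (⟨x | x, hx⟩ | x)
    exacts [⟨Sum.inl x, rfl⟩, ⟨Sum.inr (Sum.inl ⟨x, hx⟩), rfl⟩, ⟨Sum.inr (Sum.inr x), rfl⟩]
  · rintro (x | x | x) (y | y | y)
    · exact seqL_inl_le_inl.trans seqL_inl_le_inl.symm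
    · exact iff_of_true (seqL_inl_le_inr _ _) (seqL_inl_le_inr _ _)
    · exact iff_of_true (hs.insL_inl_le_inr.2 (seqL_inl_le_inr _ _)) (seqL_inl_le_inr _ _)
    · exact iff_of_false not_seqL_inr_le_inl not_seqL_inr_le_inl
    · exact seqL_inr_le_inr.trans
        (seqL_inr_le_inr (u := u) (v := c.insL v) (x := Sum.inl x) (y := Sum.inl y)).symm
    · exact (hs.insL_inl_le_inr.trans seqL_inr_le_inr).trans
        (seqL_inr_le_inr.trans h.insL_inl_le_inr).symm
    · exact iff_of_false (hs.insL_inr_le_inl.not.2 not_seqL_inr_le_inl) not_seqL_inr_le_inl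
    · exact (hs.insL_inr_le_inl.trans seqL_inr_le_inr).trans
        (seqL_inr_le_inr.trans h.insL_inr_le_inl).symm
    · exact (seqL_inr_le_inr (u := u) (v := c.insL v) (x := Sum.inr x) (y := Sum.inr y)).symm
  · rintro (x | x | x) <;> rfl

theorem IsStar.insL_seqL_iso (h : c.IsStar s) (u v : LPoset A) :
    ((c.insL v).seqL u).Iso ((c.seqL (u.mapL some)).insL v) := by
  have hs := h.seqL_map_some u
  refine Iso.of_surjective
    (Sum.elim (Sum.map (fun x => ⟨Sum.inl x.1, x.2⟩) id)
      (fun y => Sum.inl ⟨Sum.inr y, Option.some_ne_none _⟩)) ?_ ?_ ?_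
  · rintro (⟨x | x, hx⟩ | x)
    exacts [⟨Sum.inl (Sum.inl ⟨x, hx⟩), rfl⟩, ⟨Sum.inr x, rfl⟩, ⟨Sum.inl (Sum.inr x), rfl⟩]
  · rintro ((x | x) | x) ((y | y) | y)
    · exact seqL_inl_le_inl.trans
        (seqL_inl_le_inl (u := c.insL v) (v := u) (x := Sum.inl x) (y := Sum.inl y)).symm
    · exact (hs.insL_inl_le_inr.trans seqL_inl_le_inl).trans
        (seqL_inl_le_inl.trans h.insL_inl_le_inr).symm
    · exact iff_of_true (seqL_inl_le_inr _ _) (seqL_inl_le_inr _ _)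
    · exact (hs.insL_inr_le_inl.trans seqL_inl_le_inl).trans
        (seqL_inl_le_inl.trans h.insL_inr_le_inl).symm
    · exact (seqL_inl_le_inl (u := c.insL v) (v := u) (x := Sum.inr x) (y := Sum.inr y)).symm
    · exact iff_of_true (hs.insL_inr_le_inl.2 (seqL_inl_le_inr _ _)) (seqL_inl_le_inr _ _)
    · exact iff_of_false not_seqL_inr_le_inl not_seqL_inr_le_inl
    · exact iff_of_false (hs.insL_inl_le_inr.not.2 not_seqL_inr_le_inl) not_seqL_inr_le_inl
    · exact seqL_inr_le_inr.trans seqL_inr_le_inr.symm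
  · rintro ((x | x) | x) <;> rfl

theorem IsStar.parL_insL_iso (h : c.IsStar s) (u v : LPoset A) :
    (u.parL (c.insL v)).Iso (((u.mapL some).parL c).insL v) := by
  have hs := h.map_some_parL u
  refine Iso.of_surjective
    (Sum.elim (fun x => Sum.inl ⟨Sum.inl x, Option.some_ne_none _⟩)
      (Sum.map (fun y => ⟨Sum.inr y.1, y.2⟩) id)) ?_ ?_ ?_
  · rintro (⟨x | x, hx⟩ | x)
    exacts [⟨Sum.inl x, rfl⟩, ⟨Sum.inr (Sum.inl ⟨x, hx⟩), rfl⟩, ⟨Sum.inr (Sum.inr x), rfl⟩]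
  · rintro (x | x | x) (y | y | y)
    · exact parL_inl_le_inl.trans parL_inl_le_inl.symm
    · exact iff_of_false not_parL_inl_le_inr not_parL_inl_le_inr
    · exact iff_of_false (hs.insL_inl_le_inr.not.2 not_parL_inl_le_inr) not_parL_inl_le_inr
    · exact iff_of_false not_parL_inr_le_inl not_parL_inr_le_inl
    · exact parL_inr_le_inr.trans
        (parL_inr_le_inr (u := u) (v := c.insL v) (x := Sum.inl x) (y := Sum.inl y)).symm
    · exact (hs.insL_inl_le_inr.trans parL_inr_le_inr).trans
        (parL_inr_le_inr.trans h.insL_inl_le_inr).symm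
    · exact iff_of_false (hs.insL_inr_le_inl.not.2 not_parL_inr_le_inl) not_parL_inr_le_inl
    · exact (hs.insL_inr_le_inl.trans parL_inr_le_inr).trans
        (parL_inr_le_inr.trans h.insL_inr_le_inl).symm
    · exact (parL_inr_le_inr (u := u) (v := c.insL v) (x := Sum.inr x) (y := Sum.inr y)).symm
  · rintro (x | x | x) <;> rfl

end LPoset

namespace Pomset

variable {A B : Type}

theorem seq_assoc (U V W : Pomset A) : (U.seq V).seq W = U.seq (V.seq W) := by
  induction U, V, W using Quotient.inductionOn₃ with | _ u v w
  refine Quotient.sound ⟨OrderIso.sumLexAssoc u.carrier v.carrier w.carrier, ?_⟩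
  rintro ((x | x) | x) <;> rfl

theorem seq_empty (U : Pomset A) : U.seq (empty A) = U := by
  induction U using Quotient.inductionOn with | _ u
  refine Quotient.sound ⟨OrderIso.sumLexEmpty (α := u.carrier) (β := Fin 0), ?_⟩
  rintro (x | x)
  exacts [rfl, x.elim0]

theorem empty_seq (U : Pomset A) : (empty A).seq U = U := by
  induction U using Quotient.inductionOn with | _ u
  refine Quotient.sound ⟨OrderIso.emptySumLex (α := u.carrier) (β := Fin 0), ?_⟩
  rintro (x | x)
  exacts [x.elim0, rfl]

theorem par_assoc (U V W : Pomset A) : (U.par V).par W = U.par (V.par W) := by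
  induction U, V, W using Quotient.inductionOn₃ with | _ u v w
  refine Quotient.sound ⟨OrderIso.sumAssoc u.carrier v.carrier w.carrier, ?_⟩
  rintro ((x | x) | x) <;> rfl

theorem par_comm (U V : Pomset A) : U.par V = V.par U := by
  induction U, V using Quotient.inductionOn₂ with | _ u v
  refine Quotient.sound ⟨OrderIso.sumComm u.carrier v.carrier, ?_⟩
  rintro (x | x) <;> rfl

theorem par_empty (U : Pomset A) : U.par (empty A) = U := by
  induction U using Quotient.inductionOn with | _ u
  refine Quotient.sound (Setoid.symm (LPoset.Iso.of_surjective Sum.inl ?_ ?_ fun _ => rfl))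
  · rintro (x | x)
    exacts [⟨x, rfl⟩, x.elim0]
  · exact fun _ _ => Sum.inl_le_inl_iff

theorem map_empty (f : A → B) : (empty A).map f = empty B :=
  Quotient.sound ⟨OrderIso.refl _, fun x => x.elim0⟩

theorem map_seq (f : A → B) (U V : Pomset A) : (U.seq V).map f = (U.map f).seq (V.map f) := by
  induction U, V using Quotient.inductionOn₂ with | _ u v
  refine Quotient.sound ⟨OrderIso.refl (u.carrier ⊕ₗ v.carrier), ?_⟩
  rintro (x | x) <;> rfl

theorem map_par (f : A → B) (U V : Pomset A) : (U.par V).map f = (U.map f).par (V.map f) := by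
  induction U, V using Quotient.inductionOn₂ with | _ u v
  refine Quotient.sound ⟨OrderIso.refl (u.carrier ⊕ v.carrier), ?_⟩
  rintro (x | x) <;> rfl

theorem IsSP.map {U : Pomset A} (hU : U.IsSP) (f : A → B) : (U.map f).IsSP := by
  induction hU with
  | empty => exact map_empty f ▸ .empty
  | single a => exact .single (f a)
  | seq _ _ ihU ihV => exact map_seq f _ _ ▸ .seq ihU ihV
  | par _ _ ihU ihV => exact map_par f _ _ ▸ .par ihU ihV

variable {C : Pomset (Option A)} {U : Pomset A}

theorem IsCtx.map_some_seq (hC : C.IsCtx) (U : Pomset A) : ((U.map some).seq C).IsCtx := by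
  induction C, U using Quotient.inductionOn₂ with | _ c u
  obtain ⟨s, hs⟩ := LPoset.uniqueStarL_iff.1 hC
  exact (hs.map_some_seqL u).uniqueStarL

theorem IsCtx.seq_map_some (hC : C.IsCtx) (U : Pomset A) : (C.seq (U.map some)).IsCtx := by
  induction C, U using Quotient.inductionOn₂ with | _ c u
  obtain ⟨s, hs⟩ := LPoset.uniqueStarL_iff.1 hC
  exact (hs.seqL_map_some u).uniqueStarL

theorem IsCtx.map_some_par (hC : C.IsCtx) (U : Pomset A) : ((U.map some).par C).IsCtx := by
  induction C, U using Quotient.inductionOn₂ with | _ c u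
  obtain ⟨s, hs⟩ := LPoset.uniqueStarL_iff.1 hC
  exact (hs.map_some_parL u).uniqueStarL

theorem IsCtx.seq_ins (hC : C.IsCtx) (U V : Pomset A) :
    U.seq (C.ins V) = ((U.map some).seq C).ins V := by
  induction C, U, V using Quotient.inductionOn₃ with | _ c u v
  obtain ⟨s, hs⟩ := LPoset.uniqueStarL_iff.1 hC
  exact Quotient.sound (hs.seqL_insL_iso u v)

theorem IsCtx.ins_seq (hC : C.IsCtx) (U V : Pomset A) :
    (C.ins V).seq U = (C.seq (U.map some)).ins V := by
  induction C, U, V using Quotient.inductionOn₃ with | _ c u v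
  obtain ⟨s, hs⟩ := LPoset.uniqueStarL_iff.1 hC
  exact Quotient.sound (hs.insL_seqL_iso u v)

theorem IsCtx.par_ins (hC : C.IsCtx) (U V : Pomset A) :
    U.par (C.ins V) = ((U.map some).par C).ins V := by
  induction C, U, V using Quotient.inductionOn₃ with | _ c u v
  obtain ⟨s, hs⟩ := LPoset.uniqueStarL_iff.1 hC
  exact Quotient.sound (hs.parL_insL_iso u v)

theorem isSPCtx_starCtx : (starCtx A).IsSPCtx :=
  ⟨⟨PUnit.unit, rfl, fun _ _ => rfl⟩, .single none⟩

theorem starCtx_ins (U : Pomset A) : (starCtx A).ins U = U := by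
  induction U using Quotient.inductionOn with | _ u
  refine Quotient.sound (Setoid.symm (LPoset.Iso.of_surjective Sum.inr ?_ ?_ fun _ => rfl))
  · rintro (x | x)
    exacts [absurd rfl x.2, ⟨x, rfl⟩]
  · exact fun _ _ => LPoset.insL_inr_le_inr

/-- `F` maps insertion into any series-parallel context to insertion into another one, so
that closures are stable under `F`. -/
def LiftsSPCtx (F : Pomset A → Pomset A) : Prop :=
  ∀ ⦃C : Pomset (Option A)⦄, C.IsSPCtx → ∃ D : Pomset (Option A), D.IsSPCtx ∧
    ∀ V, F (C.ins V) = D.ins V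

theorem IsSP.liftsSPCtx_seq_left (hU : U.IsSP) : LiftsSPCtx fun V => U.seq V := fun _ hC =>
  ⟨_, ⟨hC.1.map_some_seq U, (hU.map some).seq hC.2⟩, hC.1.seq_ins U⟩

theorem IsSP.liftsSPCtx_seq_right (hU : U.IsSP) : LiftsSPCtx fun V => V.seq U := fun _ hC =>
  ⟨_, ⟨hC.1.seq_map_some U, hC.2.seq (hU.map some)⟩, hC.1.ins_seq U⟩

theorem IsSP.liftsSPCtx_par_left (hU : U.IsSP) : LiftsSPCtx fun V => U.par V := fun _ hC =>
  ⟨_, ⟨hC.1.map_some_par U, (hU.map some).par hC.2⟩, hC.1.par_ins U⟩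

end Pomset

namespace Lang

variable {A : Type} {L L' K K' M : Lang A}

theorem seq_eq_image2 (L K : Lang A) : L.seq K = Set.image2 Pomset.seq L K := by
  simp only [Lang.seq, Set.image2, eq_comm]

theorem par_eq_image2 (L K : Lang A) : L.par K = Set.image2 Pomset.par L K := by
  simp only [Lang.par, Set.image2, eq_comm]

theorem seq_subset_iff : L.seq K ⊆ M ↔ ∀ U ∈ L, ∀ V ∈ K, U.seq V ∈ M := by
  rw [seq_eq_image2, Set.image2_subset_iff]

theorem par_subset_iff : L.par K ⊆ M ↔ ∀ U ∈ L, ∀ V ∈ K, U.par V ∈ M := by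
  rw [par_eq_image2, Set.image2_subset_iff]

theorem seq_mono (hL : L ⊆ L') (hK : K ⊆ K') : L.seq K ⊆ L'.seq K' := by
  simpa only [seq_eq_image2] using Set.image2_subset hL hK

theorem par_mono (hL : L ⊆ L') (hK : K ⊆ K') : L.par K ⊆ L'.par K' := by
  simpa only [par_eq_image2] using Set.image2_subset hL hK

theorem seq_assoc (L K M : Lang A) : (L.seq K).seq M = L.seq (K.seq M) := by
  simpa only [seq_eq_image2] using Set.image2_assoc Pomset.seq_assoc

theorem seq_union (L K M : Lang A) : L.seq (K ∪ M) = L.seq K ∪ L.seq M := by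
  simpa only [seq_eq_image2] using Set.image2_union_right

theorem union_seq (L K M : Lang A) : Lang.seq (L ∪ K) M = L.seq M ∪ K.seq M := by
  simpa only [seq_eq_image2] using Set.image2_union_left

theorem seq_empty (L : Lang A) : L.seq ∅ = ∅ := by
  rw [seq_eq_image2, Set.image2_empty_right]

theorem empty_seq (L : Lang A) : Lang.seq ∅ L = ∅ := by
  rw [seq_eq_image2, Set.image2_empty_left]

theorem seq_one (L : Lang A) : L.seq {Pomset.empty A} = L := by
  simp only [seq_eq_image2, Set.image2_singleton_right, Pomset.seq_empty, Set.image_id']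

theorem one_seq (L : Lang A) : Lang.seq {Pomset.empty A} L = L := by
  simp only [seq_eq_image2, Set.image2_singleton_left, Pomset.empty_seq, Set.image_id']

theorem par_comm (L K : Lang A) : L.par K = K.par L := by
  simpa only [par_eq_image2] using Set.image2_comm Pomset.par_comm

theorem par_assoc (L K M : Lang A) : (L.par K).par M = L.par (K.par M) := by
  simpa only [par_eq_image2] using Set.image2_assoc Pomset.par_assoc

theorem par_union (L K M : Lang A) : L.par (K ∪ M) = L.par K ∪ L.par M := by
  simpa only [par_eq_image2] using Set.image2_union_right

theorem par_empty (L : Lang A) : L.par ∅ = ∅ := by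
  rw [par_eq_image2, Set.image2_empty_right]

theorem par_one (L : Lang A) : L.par {Pomset.empty A} = L := by
  simp only [par_eq_image2, Set.image2_singleton_right, Pomset.par_empty, Set.image_id']

theorem pow_succ' (L : Lang A) (n : ℕ) : L.pow (n + 1) = L.seq (L.pow n) := by
  induction n with
  | zero => exact (one_seq L).trans (seq_one L).symm
  | succ n ih =>
    calc L.pow (n + 1 + 1) = (L.seq (L.pow n)).seq L := congrArg (Lang.seq · L) ih
      _ = L.seq (L.pow (n + 1)) := seq_assoc L (L.pow n) L

theorem one_union_seq_star (L : Lang A) : {Pomset.empty A} ∪ L.seq L.star = L.star := by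
  simp only [Lang.star, seq_eq_image2, Set.image2_iUnion_right]
  simp only [← seq_eq_image2, ← pow_succ']
  exact Set.union_iUnion_nat_succ L.pow

theorem one_union_star_seq (L : Lang A) : {Pomset.empty A} ∪ L.star.seq L = L.star := by
  simp only [Lang.star, seq_eq_image2, Set.image2_iUnion_left]
  simp only [← seq_eq_image2]
  exact Set.union_iUnion_nat_succ L.pow

theorem seq_star_subset (h : M.seq L ⊆ M) : M.seq L.star ⊆ M := by
  have seq_pow_subset (n : ℕ) : M.seq (L.pow n) ⊆ M := by
    induction n with
    | zero => exact (seq_one M).subset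
    | succ n ih =>
      calc M.seq (L.pow (n + 1)) = (M.seq (L.pow n)).seq L := (seq_assoc M (L.pow n) L).symm
        _ ⊆ M.seq L := seq_mono ih subset_rfl
        _ ⊆ M := h
  simpa only [Lang.star, seq_eq_image2, Set.image2_iUnion_right, Set.iUnion_subset_iff]
    using seq_pow_subset

theorem star_seq_subset (h : L.seq M ⊆ M) : L.star.seq M ⊆ M := by
  have pow_seq_subset (n : ℕ) : (L.pow n).seq M ⊆ M := by
    induction n with
    | zero => exact (one_seq M).subset
    | succ n ih =>
      calc (L.pow (n + 1)).seq M = (L.pow n).seq (L.seq M) := seq_assoc (L.pow n) L M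
        _ ⊆ (L.pow n).seq M := seq_mono subset_rfl h
        _ ⊆ M := ih
  simpa only [Lang.star, seq_eq_image2, Set.image2_iUnion_left, Set.iUnion_subset_iff]
    using pow_seq_subset

theorem star_subset (hone : Pomset.empty A ∈ M) (h : M.seq L ⊆ M) : L.star ⊆ M :=
  calc L.star = Lang.seq {Pomset.empty A} L.star := (one_seq _).symm
    _ ⊆ M.seq L.star := seq_mono (Set.singleton_subset_iff.2 hone) subset_rfl
    _ ⊆ M := seq_star_subset h

theorem seq_subset_SPset (hL : L ⊆ SPset A) (hK : K ⊆ SPset A) : L.seq K ⊆ SPset A :=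
  seq_subset_iff.2 fun _ hU _ hV => .seq (hL hU) (hK hV)

theorem par_subset_SPset (hL : L ⊆ SPset A) (hK : K ⊆ SPset A) : L.par K ⊆ SPset A :=
  par_subset_iff.2 fun _ hU _ hV => .par (hL hU) (hK hV)

theorem star_subset_SPset (hL : L ⊆ SPset A) : L.star ⊆ SPset A :=
  star_subset .empty (seq_subset_SPset subset_rfl hL)

end Lang

theorem Term.lang_subset_SPset {A : Type} (e : Term A) : e.lang ⊆ SPset A := by
  induction e with
  | zero => exact Set.empty_subset _
  | one => exact Set.singleton_subset_iff.2 .empty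
  | var a => exact Set.singleton_subset_iff.2 (.single a)
  | add e f ihe ihf => exact Set.union_subset ihe ihf
  | seq e f ihe ihf => exact Lang.seq_subset_SPset ihe ihf
  | par e f ihe ihf => exact Lang.par_subset_SPset ihe ihf
  | star e ihe => exact Lang.star_subset_SPset ihe

section Closure

variable {A : Type} {H : HypSet A} {L L' K K' M : Lang A}

theorem subset_cl (H : HypSet A) (L : Lang A) : L ⊆ cl H L := fun _ => closure.base

theorem cl_subset_cl_iff : cl H L ⊆ cl H K ↔ L ⊆ cl H K := by
  refine ⟨(subset_cl H L).trans, fun h U hU => ?_⟩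
  induction hU with
  | base hU => exact h hU
  | step hef hC _ hU ih => exact closure.step hef hC ih hU

theorem cl_mono (h : L ⊆ K) : cl H L ⊆ cl H K :=
  cl_subset_cl_iff.2 (h.trans (subset_cl H K))

theorem cl_eq_cl_iff : cl H L = cl H K ↔ L ⊆ cl H K ∧ K ⊆ cl H L := by
  rw [Set.Subset.antisymm_iff, cl_subset_cl_iff, cl_subset_cl_iff]

theorem cl_union_eq_right_iff : cl H (L ∪ K) = cl H K ↔ L ⊆ cl H K := by
  rw [cl_eq_cl_iff, Set.union_subset_iff]
  have hK : K ⊆ cl H (L ∪ K) := Set.subset_union_right.trans (subset_cl H _)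
  exact ⟨fun h => h.1.1, fun h => ⟨⟨h, subset_cl H K⟩, hK⟩⟩

theorem lang_subset_cl_of_mem {e f : Term A} (hef : (e, f) ∈ H) : e.lang ⊆ cl H f.lang := by
  intro U hU
  rw [← Pomset.starCtx_ins U]
  refine closure.step hef Pomset.isSPCtx_starCtx (fun V hV => ?_) hU
  exact (Pomset.starCtx_ins V).symm ▸ closure.base hV

theorem Pomset.LiftsSPCtx.image_cl_subset {F : Pomset A → Pomset A} (hF : LiftsSPCtx F) :
    F '' cl H L ⊆ cl H (F '' L) := by
  rintro _ ⟨U, hU, rfl⟩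
  induction hU with
  | base hU => exact closure.base ⟨_, hU, rfl⟩
  | step hef hC _ hU ih =>
    obtain ⟨D, hD, hFD⟩ := hF hC
    rw [hFD]
    exact closure.step hef hD (fun V hV => hFD V ▸ ih V hV) hU

theorem seq_cl_subset (hL : L ⊆ SPset A) : L.seq (cl H K) ⊆ cl H (L.seq K) := by
  refine Lang.seq_subset_iff.2 fun U hU V hV => ?_
  have image_subset : (U.seq ·) '' K ⊆ L.seq K := by
    rintro _ ⟨W, hW, rfl⟩
    exact ⟨U, hU, W, hW, rfl⟩
  exact cl_mono image_subset ((hL hU).liftsSPCtx_seq_left.image_cl_subset ⟨V, hV, rfl⟩)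

theorem cl_seq_subset (hK : K ⊆ SPset A) : (cl H L).seq K ⊆ cl H (L.seq K) := by
  refine Lang.seq_subset_iff.2 fun U hU V hV => ?_
  have image_subset : (Pomset.seq · V) '' L ⊆ L.seq K := by
    rintro _ ⟨W, hW, rfl⟩
    exact ⟨W, hW, V, hV, rfl⟩
  exact cl_mono image_subset ((hK hV).liftsSPCtx_seq_right.image_cl_subset ⟨U, hU, rfl⟩)

theorem par_cl_subset (hL : L ⊆ SPset A) : L.par (cl H K) ⊆ cl H (L.par K) := by
  refine Lang.par_subset_iff.2 fun U hU V hV => ?_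
  have image_subset : (U.par ·) '' K ⊆ L.par K := by
    rintro _ ⟨W, hW, rfl⟩
    exact ⟨U, hU, W, hW, rfl⟩
  exact cl_mono image_subset ((hL hU).liftsSPCtx_par_left.image_cl_subset ⟨V, hV, rfl⟩)

theorem cl_par_subset (hK : K ⊆ SPset A) : (cl H L).par K ⊆ cl H (L.par K) := by
  simpa only [Lang.par_comm _ K] using par_cl_subset hK

theorem seq_subset_cl_seq (hL' : L' ⊆ SPset A) (hK : K ⊆ SPset A) (h₁ : L ⊆ cl H L')
    (h₂ : K ⊆ cl H K') : L.seq K ⊆ cl H (L'.seq K') :=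
  calc L.seq K ⊆ (cl H L').seq K := Lang.seq_mono h₁ subset_rfl
    _ ⊆ cl H (L'.seq K) := cl_seq_subset hK
    _ ⊆ cl H (L'.seq K') :=
      cl_subset_cl_iff.2 ((Lang.seq_mono subset_rfl h₂).trans (seq_cl_subset hL'))

theorem par_subset_cl_par (hL' : L' ⊆ SPset A) (hK : K ⊆ SPset A) (h₁ : L ⊆ cl H L')
    (h₂ : K ⊆ cl H K') : L.par K ⊆ cl H (L'.par K') :=
  calc L.par K ⊆ (cl H L').par K := Lang.par_mono h₁ subset_rfl
    _ ⊆ cl H (L'.par K) := cl_par_subset hK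
    _ ⊆ cl H (L'.par K') :=
      cl_subset_cl_iff.2 ((Lang.par_mono subset_rfl h₂).trans (par_cl_subset hL'))

theorem star_subset_cl_star (hL : L ⊆ SPset A) (hL' : L' ⊆ SPset A) (h : L ⊆ cl H L') :
    L.star ⊆ cl H L'.star := by
  have unfold := (Lang.one_union_star_seq L').subset
  refine Lang.star_subset (subset_cl H _ (unfold (.inl rfl))) ?_
  calc (cl H L'.star).seq L ⊆ cl H (L'.star.seq L) := cl_seq_subset hL
    _ ⊆ cl H (L'.star.seq L') := cl_subset_cl_iff.2
      (seq_subset_cl_seq (Lang.star_subset_SPset hL') hL (subset_cl H _) h)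
    _ ⊆ cl H L'.star := cl_mono (Set.subset_union_right.trans unfold)

theorem star_seq_subset_cl (hL : L ⊆ SPset A) (h : K ∪ L.seq M ⊆ cl H M) :
    L.star.seq K ⊆ cl H M := by
  obtain ⟨hK, hLM⟩ := Set.union_subset_iff.1 h
  have seq_cl_subset_cl : L.seq (cl H M) ⊆ cl H M :=
    (seq_cl_subset hL).trans (cl_subset_cl_iff.2 hLM)
  exact (Lang.seq_mono subset_rfl hK).trans (Lang.star_seq_subset seq_cl_subset_cl)

theorem seq_star_subset_cl (hL : L ⊆ SPset A) (h : K ∪ M.seq L ⊆ cl H M) :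
    K.seq L.star ⊆ cl H M := by
  obtain ⟨hK, hML⟩ := Set.union_subset_iff.1 h
  have cl_seq_subset_cl : (cl H M).seq L ⊆ cl H M :=
    (cl_seq_subset hL).trans (cl_subset_cl_iff.2 hML)
  exact (Lang.seq_mono hK subset_rfl).trans (Lang.seq_star_subset cl_seq_subset_cl)

theorem cl_union_congr (h₁ : cl H L = cl H L') (h₂ : cl H K = cl H K') :
    cl H (L ∪ K) = cl H (L' ∪ K') := by
  rw [cl_eq_cl_iff] at *
  have left (M N : Lang A) : cl H M ⊆ cl H (M ∪ N) := cl_mono Set.subset_union_left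
  have right (M N : Lang A) : cl H N ⊆ cl H (M ∪ N) := cl_mono Set.subset_union_right
  exact ⟨Set.union_subset (h₁.1.trans (left _ _)) (h₂.1.trans (right _ _)),
    Set.union_subset (h₁.2.trans (left _ _)) (h₂.2.trans (right _ _))⟩

theorem cl_seq_congr (hL : L ⊆ SPset A) (hL' : L' ⊆ SPset A) (hK : K ⊆ SPset A)
    (hK' : K' ⊆ SPset A) (h₁ : cl H L = cl H L') (h₂ : cl H K = cl H K') :
    cl H (L.seq K) = cl H (L'.seq K') := by
  rw [cl_eq_cl_iff] at *
  exact ⟨seq_subset_cl_seq hL' hK h₁.1 h₂.1, seq_subset_cl_seq hL hK' h₁.2 h₂.2⟩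

theorem cl_par_congr (hL : L ⊆ SPset A) (hL' : L' ⊆ SPset A) (hK : K ⊆ SPset A)
    (hK' : K' ⊆ SPset A) (h₁ : cl H L = cl H L') (h₂ : cl H K = cl H K') :
    cl H (L.par K) = cl H (L'.par K') := by
  rw [cl_eq_cl_iff] at *
  exact ⟨par_subset_cl_par hL' hK h₁.1 h₂.1, par_subset_cl_par hL hK' h₁.2 h₂.2⟩

theorem cl_star_congr (hL : L ⊆ SPset A) (hL' : L' ⊆ SPset A) (h : cl H L = cl H L') :
    cl H L.star = cl H L'.star := by
  rw [cl_eq_cl_iff] at *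
  exact ⟨star_subset_cl_star hL hL' h.1, star_subset_cl_star hL' hL h.2⟩

end Closure

/-- **Soundness of CKA with hypotheses**: if `e ≡^H f` then `cl_H(⟦e⟧) = cl_H(⟦f⟧)`. -/
theorem soundness (A : Type) (H : HypSet A) (e f : Term A)
    (h : CongH H e f) : cl H e.lang = cl H f.lang := by
  have sp := Term.lang_subset_SPset (A := A)
  induction h with
  | refl => rfl
  | symm _ ih => exact ih.symm
  | trans _ _ ih₁ ih₂ => exact ih₁.trans ih₂
  | addCong _ _ ih₁ ih₂ => exact cl_union_congr ih₁ ih₂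
  | seqCong _ _ ih₁ ih₂ => exact cl_seq_congr (sp _) (sp _) (sp _) (sp _) ih₁ ih₂
  | parCong _ _ ih₁ ih₂ => exact cl_par_congr (sp _) (sp _) (sp _) (sp _) ih₁ ih₂
  | starCong _ ih => exact cl_star_congr (sp _) (sp _) ih
  | lfpL _ ih =>
    exact cl_union_eq_right_iff.2 (star_seq_subset_cl (sp _) (cl_union_eq_right_iff.1 ih))
  | lfpR _ ih =>
    exact cl_union_eq_right_iff.2 (seq_star_subset_cl (sp _) (cl_union_eq_right_iff.1 ih))
  | hyp hef => exact cl_union_eq_right_iff.2 (lang_subset_cl_of_mem hef)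
  | addZero | addIdem | addAssoc =>
    simp only [Term.lang, Set.union_empty, Set.union_self, Set.union_assoc]
  | addComm e f => exact congrArg (cl H) (Set.union_comm e.lang f.lang)
  | parComm e f => exact congrArg (cl H) (Lang.par_comm e.lang f.lang)
  | seqAssoc | parAssoc => simp only [Term.lang, Lang.seq_assoc, Lang.par_assoc]
  | seqDistL | seqDistR | parDist =>
    simp only [Term.lang, Lang.seq_union, Lang.union_seq, Lang.par_union]
  | seqOneR | seqOneL | parOne => simp only [Term.lang, Lang.seq_one, Lang.one_seq, Lang.par_one]
  | seqZeroR | seqZeroL | parZero =>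
    simp only [Term.lang, Lang.seq_empty, Lang.empty_seq, Lang.par_empty]
  | starUnfoldL | starUnfoldR =>
    simp only [Term.lang, Lang.one_union_seq_star, Lang.one_union_star_seq]

end CKAH
end

section
/- Factorisation of parallel contexts around words: let C ∈ PC^sp be a series-parallel pomset context, let V and W be pomsets, and let U be a non-empty word (non-empty totally ordered pomset) over Σ. If C[U] = V ∥ W, then there exists C' ∈ PC^sp such that either C = C' ∥ W and C'[U] = V, or C = V ∥ C' and C'[U] = W. -/
namespace CKAH

/-!
Split the carrier of `C[U] = V ∥ W` into the points of `V` and those of `W`; no two points on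
opposite sides are comparable. The word `U` is totally ordered, hence lies on one side, say that
of `V`. Collapsing `U` to the node `*` sends the two sides to complementary subsets `S ∋ *` and
`Sᶜ` of `C`, again without relations between them because `U` is non-empty. Hence
`C = C|S ∥ C|Sᶜ`, where `C|Sᶜ = W` contains no `*` and `(C|S)[U] = V`. Finally, `C|S` is
series-parallel because series-parallel pomsets are closed under induced sub-pomsets.
-/

/-- A set without comparabilities to its complement: a poset is the parallel composition of its
restrictions to such a set and to the complement. -/
def IsSplit {α : Type*} [LE α] (S : Set α) : Prop :=
  ∀ ⦃x y : α⦄, x ≤ y → (x ∈ S ↔ y ∈ S)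

namespace IsSplit

theorem compl {α : Type*} [LE α] {S : Set α} (hS : IsSplit S) : IsSplit Sᶜ :=
  fun _ _ hxy => not_congr (hS hxy)

theorem preimage {α β : Type*} [Preorder α] [Preorder β] {S : Set β} (hS : IsSplit S)
    {f : α → β} (hf : Monotone f) : IsSplit (f ⁻¹' S) :=
  fun _ _ hxy => hS (hf hxy)

theorem range_sumInl {α β : Type*} [LE α] [LE β] :
    IsSplit (Set.range (Sum.inl : α → α ⊕ β)) := by
  rintro (x | x) (y | y) hxy <;> simp_all

end IsSplit

variable {A : Type}

namespace LPoset

/-- The isomorphism class of a labelled poset. -/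
abbrev toPomset (u : LPoset A) : Pomset A := ⟦u⟧

theorem exists_toPomset_eq (U : Pomset A) : ∃ u : LPoset A, u.toPomset = U :=
  Quotient.exists_rep U

/-- The labelled poset induced on a subset of the carrier. -/
noncomputable def restrict (u : LPoset A) (S : Set u.carrier) : LPoset A where
  carrier := S
  fin := Fintype.ofFinite S
  lab := fun x => u.lab x

variable {u v : LPoset A}

theorem toPomset_eq_of_surjective (f : u.carrier ↪o v.carrier) (hf : Function.Surjective f)
    (hlab : ∀ x, v.lab (f x) = u.lab x) : u.toPomset = v.toPomset :=
  Quotient.sound ⟨RelIso.ofSurjective f hf, hlab⟩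

theorem toPomset_eq_restrict_of_range_eq (f : u.carrier ↪o v.carrier)
    (hlab : ∀ x, v.lab (f x) = u.lab x) {S : Set v.carrier} (hS : Set.range f = S) :
    u.toPomset = (v.restrict S).toPomset := by
  subst hS
  exact Quotient.sound ⟨f.orderIso, hlab⟩

theorem exists_toPomset_restrict_eq (h : u.toPomset = v.toPomset) (S : Set u.carrier) :
    ∃ T : Set v.carrier, (u.restrict S).toPomset = (v.restrict T).toPomset := by
  obtain ⟨e, he⟩ := Quotient.exact h
  exact ⟨_, toPomset_eq_restrict_of_range_eq (u := u.restrict S)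
    ((OrderEmbedding.subtype (· ∈ S)).trans e.toOrderEmbedding) (fun x => he x.1) rfl⟩

theorem toPomset_eq_empty_iff : u.toPomset = Pomset.empty A ↔ IsEmpty u.carrier := by
  constructor
  · intro h
    obtain ⟨e, -⟩ := Quotient.exact h
    exact e.toEquiv.isEmpty_congr.mpr Fin.isEmpty'
  · intro _
    exact toPomset_eq_of_surjective (v := emptyL A) (OrderEmbedding.ofIsEmpty)
      (fun x => x.elim0) isEmptyElim

theorem toPomset_restrict_eq_empty_iff {S : Set u.carrier} :
    (u.restrict S).toPomset = Pomset.empty A ↔ S = ∅ :=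
  toPomset_eq_empty_iff.trans Set.isEmpty_coe_sort

theorem toPomset_restrict_univ : (u.restrict Set.univ).toPomset = u.toPomset :=
  toPomset_eq_of_surjective (u := u.restrict Set.univ) (OrderEmbedding.subtype (· ∈ Set.univ))
    (fun x => ⟨⟨x, trivial⟩, rfl⟩) fun _ => rfl

theorem seq_restrict_preimage (S : Set (u.seqL v).carrier) :
    Pomset.seq (u.restrict {x | toLex (.inl x) ∈ S}).toPomset
        (v.restrict {y | toLex (.inr y) ∈ S}).toPomset =
      ((u.seqL v).restrict S).toPomset := by
  refine toPomset_eq_restrict_of_range_eq (u := seqL (u.restrict _) (v.restrict _))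
    (RelEmbedding.sumLexMap (OrderEmbedding.subtype _) (OrderEmbedding.subtype _)) ?_ ?_
  · rintro (x | x) <;> rfl
  · ext (x | x)
    · exact ⟨by rintro ⟨y | y, ⟨⟩⟩; exact y.2, fun hx => ⟨toLex (.inl ⟨x, hx⟩), rfl⟩⟩
    · exact ⟨by rintro ⟨y | y, ⟨⟩⟩; exact y.2, fun hx => ⟨toLex (.inr ⟨x, hx⟩), rfl⟩⟩

theorem par_restrict_preimage (S : Set (u.parL v).carrier) :
    Pomset.par (u.restrict (Sum.inl ⁻¹' S)).toPomset (v.restrict (Sum.inr ⁻¹' S)).toPomset =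
      ((u.parL v).restrict S).toPomset := by
  refine toPomset_eq_restrict_of_range_eq (u := parL (u.restrict _) (v.restrict _))
    (RelEmbedding.sumLiftRelMap (OrderEmbedding.subtype _) (OrderEmbedding.subtype _)) ?_ ?_
  · rintro (x | x) <;> rfl
  · ext (x | x)
    · exact ⟨by rintro ⟨y | y, ⟨⟩⟩; exact y.2, fun hx => ⟨.inl ⟨x, hx⟩, rfl⟩⟩
    · exact ⟨by rintro ⟨y | y, ⟨⟩⟩; exact y.2, fun hx => ⟨.inr ⟨x, hx⟩, rfl⟩⟩

theorem par_restrict_compl {S : Set u.carrier} (hS : IsSplit S) :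
    Pomset.par (u.restrict S).toPomset (u.restrict Sᶜ).toPomset = u.toPomset := by
  classical
  let e : ((u.restrict S).parL (u.restrict Sᶜ)).carrier ≃ u.carrier := Equiv.Set.sumCompl S
  refine Quotient.sound ⟨⟨e, ?_⟩, ?_⟩
  · rintro (x | x) (y | y)
    · exact (Sum.inl_le_inl_iff (a := x) (b := y)).symm
    · exact iff_of_false (fun h => y.2 ((hS h).mp x.2)) Sum.not_inl_le_inr
    · exact iff_of_false (fun h => x.2 ((hS h).mpr y.2)) Sum.not_inr_le_inl
    · exact (Sum.inr_le_inr_iff (a := x) (b := y)).symm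
  · rintro (x | x) <;> rfl

theorem exists_isSplit_of_toPomset_eq_par {V W : Pomset A} (h : u.toPomset = V.par W) :
    ∃ S : Set u.carrier, IsSplit S ∧
      V = (u.restrict S).toPomset ∧ W = (u.restrict Sᶜ).toPomset := by
  obtain ⟨v, rfl⟩ := exists_toPomset_eq V
  obtain ⟨w, rfl⟩ := exists_toPomset_eq W
  obtain ⟨e, he⟩ := Quotient.exact (a := v.parL w) h.symm
  refine ⟨e.symm ⁻¹' Set.range Sum.inl, IsSplit.range_sumInl.preimage e.symm.monotone, ?_, ?_⟩
  · refine toPomset_eq_restrict_of_range_eq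
      ((RelEmbedding.sumLiftRelInl (· ≤ ·) (· ≤ ·)).trans e.toOrderEmbedding)
      (fun x => he (.inl x)) ?_
    exact (Set.range_comp e Sum.inl).trans (e.image_eq_preimage_symm _)
  · refine toPomset_eq_restrict_of_range_eq
      ((RelEmbedding.sumLiftRelInr (· ≤ ·) (· ≤ ·)).trans e.toOrderEmbedding)
      (fun x => he (.inr x)) ?_
    exact ((Set.range_comp e Sum.inr).trans (e.image_eq_preimage_symm _)).trans
      (congrArg (e.symm ⁻¹' ·) Set.compl_range_inl.symm)

end LPoset

namespace Pomset

theorem par_comm_s17 (P Q : Pomset A) : P.par Q = Q.par P := by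
  obtain ⟨p, rfl⟩ := LPoset.exists_toPomset_eq P
  obtain ⟨q, rfl⟩ := LPoset.exists_toPomset_eq Q
  exact Quotient.sound ⟨OrderIso.sumComm p.carrier q.carrier, by rintro (x | x) <;> rfl⟩

namespace IsSP

theorem restrict {u : LPoset A} (h : IsSP u.toPomset) (S : Set u.carrier) :
    IsSP (u.restrict S).toPomset := by
  generalize hU : u.toPomset = U at h
  induction h generalizing u with
  | empty =>
    have := LPoset.toPomset_eq_empty_iff.mp hU
    rw [LPoset.toPomset_restrict_eq_empty_iff.mpr (Set.eq_empty_of_isEmpty S)]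
    exact .empty
  | single a =>
    obtain ⟨T, hT⟩ := LPoset.exists_toPomset_restrict_eq (v := LPoset.singleL a) hU S
    rw [hT]
    have : Subsingleton (LPoset.singleL a).carrier := inferInstanceAs (Subsingleton PUnit)
    induction T using Subsingleton.set_cases with
    | h0 =>
      rw [LPoset.toPomset_restrict_eq_empty_iff.mpr rfl]
      exact .empty
    | h1 =>
      rw [LPoset.toPomset_restrict_univ]
      exact .single a
  | @seq P Q _ _ ihP ihQ =>
    obtain ⟨p, rfl⟩ := LPoset.exists_toPomset_eq P
    obtain ⟨q, rfl⟩ := LPoset.exists_toPomset_eq Q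
    obtain ⟨T, hT⟩ := LPoset.exists_toPomset_restrict_eq (v := p.seqL q) hU S
    rw [hT, ← LPoset.seq_restrict_preimage]
    exact .seq (ihP _ rfl) (ihQ _ rfl)
  | @par P Q _ _ ihP ihQ =>
    obtain ⟨p, rfl⟩ := LPoset.exists_toPomset_eq P
    obtain ⟨q, rfl⟩ := LPoset.exists_toPomset_eq Q
    obtain ⟨T, hT⟩ := LPoset.exists_toPomset_restrict_eq (v := p.parL q) hU S
    rw [hT, ← LPoset.par_restrict_preimage]
    exact .par (ihP _ rfl) (ihQ _ rfl)

theorem of_par_left {P Q : Pomset A} (h : (P.par Q).IsSP) : P.IsSP := by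
  obtain ⟨u, hu⟩ := LPoset.exists_toPomset_eq (P.par Q)
  obtain ⟨S, -, rfl, -⟩ := LPoset.exists_isSplit_of_toPomset_eq_par hu
  exact restrict (hu ▸ h) S

theorem of_par_right {P Q : Pomset A} (h : (P.par Q).IsSP) : Q.IsSP :=
  of_par_left (P.par_comm_s17 Q ▸ h)

end IsSP

/-- Non-empty pomsets that are not the parallel composition of two non-empty pomsets. -/
def IsParPrime (U : Pomset A) : Prop :=
  U ≠ empty A ∧ ∀ P Q : Pomset A, U = P.par Q → P = empty A ∨ Q = empty A

theorem IsParPrime.nonempty {u : LPoset A} (hu : IsParPrime u.toPomset) :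
    Nonempty u.carrier :=
  not_isEmpty_iff.mp fun h => hu.1 (LPoset.toPomset_eq_empty_iff.mpr h)

theorem IsParPrime.eq_empty_or_univ {u : LPoset A} (hu : IsParPrime u.toPomset)
    {S : Set u.carrier} (hS : IsSplit S) : S = ∅ ∨ S = Set.univ := by
  rw [← Set.compl_empty_iff, ← LPoset.toPomset_restrict_eq_empty_iff,
    ← LPoset.toPomset_restrict_eq_empty_iff]
  exact hu.2 _ _ (LPoset.par_restrict_compl hS).symm

end Pomset

theorem IsNonemptyWord.isParPrime {U : Pomset A} (hU : IsNonemptyWord U) : U.IsParPrime := by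
  refine ⟨hU.2, ?_⟩
  rintro P Q rfl
  obtain ⟨p, rfl⟩ := LPoset.exists_toPomset_eq P
  obtain ⟨q, rfl⟩ := LPoset.exists_toPomset_eq Q
  have hword : (p.parL q).isWordL := hU.1
  rw [LPoset.toPomset_eq_empty_iff, LPoset.toPomset_eq_empty_iff]
  by_contra! ⟨⟨x⟩, ⟨y⟩⟩
  exact (hword (.inl x) (.inr y)).elim Sum.not_inl_le_inr Sum.not_inr_le_inl

namespace LPoset

variable {c : LPoset (Option A)} {u : LPoset A} {s : c.carrier}

/-- The inclusion into `c[u]` of the nodes of `c` other than `*`. -/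
def insInl (c : LPoset (Option A)) (u : LPoset A) :
    {x : c.carrier // c.lab x ≠ none} ↪o (c.insL u).carrier where
  toFun := Sum.inl
  inj' := Sum.inl_injective
  map_rel_iff' := Iff.rfl

/-- The inclusion into `c[u]` of the inserted copy of `u`. -/
def insInr (c : LPoset (Option A)) (u : LPoset A) : u.carrier ↪o (c.insL u).carrier where
  toFun := Sum.inr
  inj' := Sum.inr_injective
  map_rel_iff' := Iff.rfl

/-- The projection of `c[u]` onto `c` that contracts the inserted copy of `u` to the node `s`,
which is meant to be the `*`-labelled one. -/
def collapse (c : LPoset (Option A)) (u : LPoset A) (s : c.carrier) :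
    (c.insL u).carrier → c.carrier :=
  Sum.elim Subtype.val fun _ => s

theorem insInl_le_insInr (hc : c.uniqueStarL) (hs : c.lab s = none)
    {x : {x : c.carrier // c.lab x ≠ none}} {y : u.carrier} :
    c.insInl u x ≤ c.insInr u y ↔ x.1 ≤ s :=
  ⟨fun ⟨_, _, ht, hxt⟩ => hc.unique ht hs ▸ hxt, fun h => ⟨hc, s, hs, h⟩⟩

theorem insInr_le_insInl (hc : c.uniqueStarL) (hs : c.lab s = none)
    {x : u.carrier} {y : {x : c.carrier // c.lab x ≠ none}} :
    c.insInr u x ≤ c.insInl u y ↔ s ≤ y.1 :=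
  ⟨fun ⟨_, _, ht, hty⟩ => hc.unique ht hs ▸ hty, fun h => ⟨hc, s, hs, h⟩⟩

theorem exists_le_collapse_eq [Nonempty u.carrier] (hc : c.uniqueStarL) (hs : c.lab s = none)
    {x y : c.carrier} (hxy : x ≤ y) :
    ∃ p q : (c.insL u).carrier, p ≤ q ∧ c.collapse u s p = x ∧ c.collapse u s q = y := by
  obtain ⟨z⟩ := ‹Nonempty u.carrier›
  by_cases hx : c.lab x = none <;> by_cases hy : c.lab y = none
  · exact ⟨c.insInr u z, c.insInr u z, le_rfl, hc.unique hs hx, hc.unique hs hy⟩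
  · obtain rfl := hc.unique hs hx
    exact ⟨c.insInr u z, c.insInl u ⟨y, hy⟩, (insInr_le_insInl hc hs).mpr hxy, rfl, rfl⟩
  · obtain rfl := hc.unique hs hy
    exact ⟨c.insInl u ⟨x, hx⟩, c.insInr u z, (insInl_le_insInr hc hs).mpr hxy, rfl, rfl⟩
  · exact ⟨c.insInl u ⟨x, hx⟩, c.insInl u ⟨y, hy⟩, hxy, rfl, rfl⟩

theorem isSplit_of_preimage_collapse [Nonempty u.carrier] (hc : c.uniqueStarL)
    (hs : c.lab s = none) {S : Set c.carrier} (hS : IsSplit (c.collapse u s ⁻¹' S)) :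
    IsSplit S := by
  intro x y hxy
  obtain ⟨p, q, hpq, rfl, rfl⟩ := exists_le_collapse_eq (u := u) hc hs hxy
  exact hS hpq

theorem preimage_image_collapse (hs : c.lab s = none) {T : Set (c.insL u).carrier}
    (hT : Set.range (c.insInr u) ⊆ T) : c.collapse u s ⁻¹' (c.collapse u s '' T) = T := by
  refine Set.Subset.antisymm ?_ (Set.subset_preimage_image _ _)
  rintro (x | y) ⟨p | z, hp, hpx⟩
  · rwa [Subtype.ext hpx] at hp
  · exact absurd ((congrArg c.lab hpx).symm.trans hs) x.2
  · exact hT ⟨y, rfl⟩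
  · exact hT ⟨y, rfl⟩

theorem uniqueStarL_restrict (hc : c.uniqueStarL) (hs : c.lab s = none) {S : Set c.carrier}
    (hsS : s ∈ S) : (c.restrict S).uniqueStarL :=
  ⟨⟨s, hsS⟩, hs, fun _ ht => Subtype.ext (hc.unique ht hs)⟩

theorem ins_restrict (hc : c.uniqueStarL) (hs : c.lab s = none) {S : Set c.carrier}
    (hsS : s ∈ S) :
    (c.restrict S).toPomset.ins u.toPomset =
      ((c.insL u).restrict (c.collapse u s ⁻¹' S)).toPomset := by
  have hcS := uniqueStarL_restrict hc hs hsS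
  have hsS' : (c.restrict S).lab ⟨s, hsS⟩ = none := hs
  let f : ((c.restrict S).insL u).carrier → (c.insL u).carrier :=
    Sum.map (fun x => ⟨x.1.1, x.2⟩) id
  have hf : ∀ p q, f p ≤ f q ↔ p ≤ q := by
    rintro (x | x) (y | y)
    · exact Iff.rfl
    · exact (insInl_le_insInr hc hs).trans (insInl_le_insInr hcS hsS').symm
    · exact (insInr_le_insInl hc hs).trans (insInr_le_insInl hcS hsS').symm
    · exact Iff.rfl
  refine toPomset_eq_restrict_of_range_eq (u := (c.restrict S).insL u)
    (OrderEmbedding.ofMapLEIff f hf) ?_ ?_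
  · rintro (x | x) <;> rfl
  · ext (x | x)
    · exact ⟨by rintro ⟨y | y, ⟨⟩⟩; exact y.1.2, fun hx => ⟨.inl ⟨⟨x.1, hx⟩, x.2⟩, rfl⟩⟩
    · exact iff_of_true ⟨.inr x, rfl⟩ hsS

theorem restrict_eq_map_some (hc : c.uniqueStarL) (hs : c.lab s = none) {S : Set c.carrier}
    (hsS : s ∉ S) :
    (c.restrict S).toPomset =
      Pomset.map some ((c.insL u).restrict (c.collapse u s ⁻¹' S)).toPomset := by
  have hne (x : S) : c.lab x ≠ none := fun hx => hsS (hc.unique hs hx ▸ x.2)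
  let f : (c.restrict S).carrier ↪o ((c.insL u).mapL some).carrier :=
    OrderEmbedding.ofMapLEIff (fun x => c.insInl u ⟨x.1, hne x⟩) fun _ _ => Iff.rfl
  have hlab (x : (c.restrict S).carrier) :
      ((c.insL u).mapL some).lab (f x) = (c.restrict S).lab x := Option.some_get _
  refine toPomset_eq_restrict_of_range_eq f hlab ?_
  ext (x | x)
  · exact ⟨by rintro ⟨y, ⟨⟩⟩; exact y.2, fun hx => ⟨⟨x.1, hx⟩, rfl⟩⟩
  · exact iff_of_false (by rintro ⟨y, ⟨⟩⟩) hsS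

theorem exists_factor_of_range_insInr_subset [Nonempty u.carrier] (hc : c.uniqueStarL)
    {T : Set (c.insL u).carrier} (hT : IsSplit T) (huT : Set.range (c.insInr u) ⊆ T) :
    ∃ C' : Pomset (Option A), C'.IsCtx ∧
      c.toPomset = C'.par (Pomset.map some ((c.insL u).restrict Tᶜ).toPomset) ∧
      C'.ins u.toPomset = ((c.insL u).restrict T).toPomset := by
  obtain ⟨s, hs, -⟩ := id hc
  obtain ⟨z⟩ := id ‹Nonempty u.carrier›
  obtain ⟨S, rfl⟩ : ∃ S, c.collapse u s ⁻¹' S = T := ⟨_, preimage_image_collapse hs huT⟩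
  have hsS : s ∈ S := huT ⟨z, rfl⟩
  refine ⟨(c.restrict S).toPomset, uniqueStarL_restrict hc hs hsS, ?_, ins_restrict hc hs hsS⟩
  rw [← Set.preimage_compl, ← restrict_eq_map_some hc hs (not_not_intro hsS),
    par_restrict_compl (isSplit_of_preimage_collapse hc hs hT)]

end LPoset

theorem context_prime_locus_general {C : Pomset (Option A)} (hC : C.IsCtx) {U V W : Pomset A}
    (hU : U.IsParPrime) (h : C.ins U = V.par W) :
    ∃ C' : Pomset (Option A), C'.IsCtx ∧
      ((C = C'.par (Pomset.map some W) ∧ C'.ins U = V) ∨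
        (C = (Pomset.map some V).par C' ∧ C'.ins U = W)) := by
  obtain ⟨c, rfl⟩ := LPoset.exists_toPomset_eq C
  obtain ⟨u, rfl⟩ := LPoset.exists_toPomset_eq U
  obtain ⟨T, hT, rfl, rfl⟩ := LPoset.exists_isSplit_of_toPomset_eq_par (u := c.insL u) h
  have := hU.nonempty
  rcases hU.eq_empty_or_univ (hT.preimage (c.insInr u).monotone) with hTu | hTu
  · have huT : Set.range (c.insInr u) ⊆ Tᶜ :=
      Set.range_subset_iff.mpr fun y hy => Set.eq_empty_iff_forall_notMem.mp hTu y hy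
    obtain ⟨C', hC', hfactor, hins⟩ := LPoset.exists_factor_of_range_insInr_subset hC hT.compl huT
    rw [compl_compl, Pomset.par_comm_s17] at hfactor
    exact ⟨C', hC', .inr ⟨hfactor, hins⟩⟩
  · have huT : Set.range (c.insInr u) ⊆ T :=
      Set.range_subset_iff.mpr fun y => Set.eq_univ_iff_forall.mp hTu y
    obtain ⟨C', hC', hfactor, hins⟩ := LPoset.exists_factor_of_range_insInr_subset hC hT huT
    exact ⟨C', hC', .inl ⟨hfactor, hins⟩⟩

/-- **Factorisation of parallel contexts around non-empty words.** -/
theorem context_prime_locus (A : Type) (C : Pomset (Option A)) (hC : C.IsSPCtx)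
    (V W : Pomset A) (U : Pomset A) (hU : IsNonemptyWord U)
    (h : C.ins U = Pomset.par V W) :
    ∃ C' : Pomset (Option A), C'.IsSPCtx ∧
      ((C = Pomset.par C' (Pomset.map some W) ∧ C'.ins U = V) ∨
       (C = Pomset.par (Pomset.map some V) C' ∧ C'.ins U = W)) := by
  obtain ⟨C', hC', ⟨rfl, hV⟩ | ⟨rfl, hW⟩⟩ := context_prime_locus_general hC.1 hU.isParPrime h
  · exact ⟨C', ⟨hC', hC.2.of_par_left⟩, .inl ⟨rfl, hV⟩⟩
  · exact ⟨C', ⟨hC', hC.2.of_par_right⟩, .inr ⟨rfl, hW⟩⟩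

end CKAH
end
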